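/- Let λ > 0 and q₋ < x₀ < 0 < q₊. As ε → 0⁺, the conditional law Law[τ_ε − (2/λ)·ln(1/ε) | C_ε] converges weakly to the law of (1/λ)·ln(2λ·q₊·|x₀|) + (1/λ)·Z, where Z is a standard Gumbel random variable. -/

import Mathlib

open MeasureTheory ProbabilityTheory Filter Topology Set

/-- `B` is a standard Brownian motion (for times `t ≥ 0`) on the probability space `(Ω, P)`:
it is measurable at each time, starts at `0` with a.s. continuous paths on `[0, ∞)`,
has centered Gaussian increments of variance `t - s`, and independent increments. -/
def IsBrownianMotion {Ω : Type*} [MeasurableSpace Ω] (P : Measure Ω) (B : ℝ → Ω → ℝ) : Prop :=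
  (∀ t : ℝ, Measurable (B t)) ∧
  (∀ᵐ ω ∂P, B 0 ω = 0 ∧ ContinuousOn (fun t => B t ω) (Set.Ici (0 : ℝ))) ∧
  (∀ s t : ℝ, 0 ≤ s → s ≤ t →
    Measure.map (fun ω => B t ω - B s ω) P = gaussianReal 0 (Real.toNNReal (t - s))) ∧
  (∀ t : ℕ → ℝ, Monotone t → (∀ i, 0 ≤ t i) →
    iIndepFun (fun i ω => B (t (i + 1)) ω - B (t i) ω) P)

/-!
Write `H = 1 / (2λ)`. After division by `e^{λt}` the diffusion is `x₀ + ε B(v)`, run on the bounded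
clock `v = (1 - e^{-2λt}) / (2λ) < H`, and a level `q` becomes the moving boundary
`q e^{-λt} = q √((H - v) / H)`, which shrinks exactly like the standard deviation of the noise still
to come. A path that has crossed this boundary therefore stays above a slightly lower one with
probability tending to `1`, uniformly in the crossing time. A path that has crossed the lower
boundary at level `-q` needs an exponentially unlikely increment to become positive again, and for
`q > |x₀|` this is negligible compared with the exit at `q₊`. Hence, for `s = (2/λ) log (1/ε) + y`,
the exit at `q₊` before time `s` has asymptotically the probability of `X_ε(s) ≥ q₊`, and the exit
at `q₊` at any time has that of `x₀ + ε B(H) ≥ 0`. Both are Gaussian tails at levels of order `1/ε`;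
by Mills' asymptotics their ratio tends to `exp (-D / 2)`, where `D = 4 λ q₊ |x₀| e^{-λy}` is the
limit of the difference of the squared levels. As a function of `y` this is the distribution
function of the affine image of the Gumbel law.
-/

open Asymptotics
open scoped NNReal

/-! ### Gaussian tails -/

/-- The upper tail `P (N ≥ z)` of a standard normal variable `N`. -/
noncomputable def gaussianTail (z : ℝ) : ℝ := (gaussianReal 0 1).real (Ici z)

lemma gaussianTail_nonneg (z : ℝ) : 0 ≤ gaussianTail z := measureReal_nonneg

lemma gaussianTail_le_one (z : ℝ) : gaussianTail z ≤ 1 := measureReal_le_one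

lemma gaussianTail_antitone : Antitone gaussianTail :=
  fun _ _ h ↦ measureReal_mono (Ici_subset_Ici.2 h)

lemma gaussianReal_real_Ici {v : ℝ≥0} (hv : v ≠ 0) (c : ℝ) :
    (gaussianReal 0 v).real (Ici c) = gaussianTail (c / √v) := by
  have hσ : 0 < √(v : ℝ) := Real.sqrt_pos.2 (by positivity)
  have hscale : gaussianReal 0 v = (gaussianReal 0 1).map (√(v : ℝ) * ·) := by
    rw [gaussianReal_map_const_mul]
    congr 1
    · simp
    · ext; simp
  rw [gaussianTail, hscale, map_measureReal_apply (by fun_prop) measurableSet_Ici]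
  congr 1
  ext x
  simp only [mem_preimage, mem_Ici, div_le_iff₀' hσ]

lemma gaussianReal_real_Ici_le {v : ℝ≥0} {c z : ℝ} (hc : 0 < c) (h : z * √v ≤ c) :
    (gaussianReal 0 v).real (Ici c) ≤ gaussianTail z := by
  obtain rfl | hv := eq_or_ne v 0
  · simpa [gaussianReal_zero_var, measureReal_def, hc.not_ge] using gaussianTail_nonneg z
  · rw [gaussianReal_real_Ici hv]
    exact gaussianTail_antitone ((le_div_iff₀ (Real.sqrt_pos.2 (by positivity))).2 h)

lemma gaussianReal_real_Iic_neg (v : ℝ≥0) (c : ℝ) :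
    (gaussianReal 0 v).real (Iic (-c)) = (gaussianReal 0 v).real (Ici c) := by
  have hneg : gaussianReal 0 v = (gaussianReal 0 v).map (-·) := by simp [gaussianReal_map_neg]
  rw [hneg, map_measureReal_apply (by fun_prop) measurableSet_Iic, ← hneg]
  simp

lemma gaussianTail_eq_integral (z : ℝ) :
    gaussianTail z = ∫ x in Ioi z, gaussianPDFReal 0 1 x := by
  rw [gaussianTail, measureReal_def, gaussianReal_apply_eq_integral _ one_ne_zero,
    ENNReal.toReal_ofReal (integral_nonneg fun x ↦ gaussianPDFReal_nonneg _ _ x),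
    integral_Ici_eq_integral_Ioi]

lemma gaussianPDFReal_zero_one (x : ℝ) :
    gaussianPDFReal 0 1 x = (√(2 * Real.pi))⁻¹ * Real.exp (-x ^ 2 / 2) := by
  simp [gaussianPDFReal]

lemma gaussianPDFReal_zero_one_div (x y : ℝ) :
    gaussianPDFReal 0 1 x / gaussianPDFReal 0 1 y = Real.exp (-(x ^ 2 - y ^ 2) / 2) := by
  rw [gaussianPDFReal_zero_one, gaussianPDFReal_zero_one, mul_div_mul_left _ _ (by positivity),
    ← Real.exp_sub]
  congr 1
  ring

lemma hasDerivAt_neg_gaussianPDFReal_div {x : ℝ} (hx : x ≠ 0) :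
    HasDerivAt (fun x ↦ -(gaussianPDFReal 0 1 x / x))
      (gaussianPDFReal 0 1 x * (1 + 1 / x ^ 2)) x := by
  have hexponent : HasDerivAt (fun x : ℝ ↦ -x ^ 2 / 2) (-x) x := by
    convert! ((hasDerivAt_pow 2 x).neg.div_const 2) using 1
    simp only [Nat.cast_ofNat]
    ring
  have hpdf : HasDerivAt (gaussianPDFReal 0 1)
      ((√(2 * Real.pi))⁻¹ * (Real.exp (-x ^ 2 / 2) * (-x))) x :=
    (hexponent.exp.const_mul _).congr_of_eventuallyEq (.of_forall gaussianPDFReal_zero_one)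
  convert! (hpdf.div (hasDerivAt_id x) hx).neg using 1
  rw [gaussianPDFReal_zero_one]
  simp only [id]
  field_simp
  ring

lemma tendsto_gaussianPDFReal_div_atTop :
    Tendsto (fun x ↦ gaussianPDFReal 0 1 x / x) atTop (𝓝 0) := by
  refine squeeze_zero' (g := fun x ↦ (√(2 * Real.pi))⁻¹ / x) ?_ ?_
    (tendsto_const_nhds.div_atTop tendsto_id)
  · filter_upwards [eventually_gt_atTop 0] with x hx
    exact div_nonneg (gaussianPDFReal_nonneg _ _ _) hx.le
  · filter_upwards [eventually_gt_atTop 0] with x hx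
    rw [gaussianPDFReal_zero_one]
    gcongr
    refine mul_le_of_le_one_right (by positivity) (Real.exp_le_one_iff.2 ?_)
    nlinarith [sq_nonneg x]

/-- Both bounds compare the density `φ x` with `(1 + 1 / x ^ 2) * φ x`, the derivative of
`-(φ x / x)`. -/
lemma gaussianTail_mills {z : ℝ} (hz : 0 < z) :
    gaussianTail z ≤ gaussianPDFReal 0 1 z / z ∧
      gaussianPDFReal 0 1 z / z ≤ (1 + 1 / z ^ 2) * gaussianTail z := by
  have hderiv : ∀ x ∈ Ici z, HasDerivAt (fun x ↦ -(gaussianPDFReal 0 1 x / x))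
      (gaussianPDFReal 0 1 x * (1 + 1 / x ^ 2)) x := fun x hx ↦
    hasDerivAt_neg_gaussianPDFReal_div (hz.trans_le hx).ne'
  have hnonneg : ∀ x ∈ Ioi z, 0 ≤ gaussianPDFReal 0 1 x * (1 + 1 / x ^ 2) := fun x _ ↦
    mul_nonneg (gaussianPDFReal_nonneg _ _ _) (by positivity)
  have hlim : Tendsto (fun x ↦ -(gaussianPDFReal 0 1 x / x)) atTop (𝓝 0) := by
    simpa using tendsto_gaussianPDFReal_div_atTop.neg
  have hint := integrableOn_Ioi_deriv_of_nonneg' hderiv hnonneg hlim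
  have hFTC := integral_Ioi_of_hasDerivAt_of_nonneg' hderiv hnonneg hlim
  have hφ : IntegrableOn (gaussianPDFReal 0 1) (Ioi z) :=
    (integrable_gaussianPDFReal 0 1).integrableOn
  rw [zero_sub, neg_neg] at hFTC
  rw [← hFTC, gaussianTail_eq_integral, ← integral_const_mul]
  refine ⟨setIntegral_mono_on hφ hint measurableSet_Ioi fun x _ ↦ ?_,
    setIntegral_mono_on hint (hφ.const_mul _) measurableSet_Ioi fun x (hx : z < x) ↦ ?_⟩
  · exact le_mul_of_one_le_right (gaussianPDFReal_nonneg _ _ _)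
      (le_add_of_nonneg_right (by positivity))
  · rw [mul_comm]
    exact mul_le_mul_of_nonneg_right (by gcongr) (gaussianPDFReal_nonneg _ _ _)

lemma gaussianTail_pos {z : ℝ} (hz : 0 < z) : 0 < gaussianTail z := by
  have hφ : 0 < gaussianPDFReal 0 1 z / z := div_pos (gaussianPDFReal_pos _ _ _ one_ne_zero) hz
  exact pos_of_mul_pos_right (hφ.trans_le (gaussianTail_mills hz).2) (by positivity)

lemma tendsto_gaussianTail_atTop : Tendsto gaussianTail atTop (𝓝 0) := by
  refine squeeze_zero' (Eventually.of_forall gaussianTail_nonneg) ?_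
    tendsto_gaussianPDFReal_div_atTop
  filter_upwards [eventually_gt_atTop 0] with z hz using (gaussianTail_mills hz).1

lemma gaussianTail_isEquivalent :
    gaussianTail ~[atTop] fun z ↦ gaussianPDFReal 0 1 z / z := by
  refine isEquivalent_of_tendsto_one ?_
  have hlower : Tendsto (fun z : ℝ ↦ (1 + 1 / z ^ 2)⁻¹) atTop (𝓝 1) := by
    have : Tendsto (fun z : ℝ ↦ 1 / z ^ 2) atTop (𝓝 0) :=
      tendsto_const_nhds.div_atTop (tendsto_pow_atTop two_ne_zero)
    simpa using (this.const_add 1).inv₀ (by simp)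
  have hφ {z : ℝ} (hz : 0 < z) : 0 < gaussianPDFReal 0 1 z / z :=
    div_pos (gaussianPDFReal_pos _ _ _ one_ne_zero) hz
  refine tendsto_of_tendsto_of_tendsto_of_le_of_le' hlower tendsto_const_nhds ?_ ?_
  · filter_upwards [eventually_gt_atTop 0] with z hz
    rw [Pi.div_apply, le_div_iff₀ (hφ hz), inv_mul_le_iff₀ (by positivity)]
    exact (gaussianTail_mills hz).2
  · filter_upwards [eventually_gt_atTop 0] with z hz
    exact (div_le_one (hφ hz)).2 (gaussianTail_mills hz).1

section TailRatio

variable {ι : Type*} {l : Filter ι} {y z : ι → ℝ}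

lemma tendsto_gaussianTail_div {L ρ : ℝ} (hρ : 0 < ρ)
    (hz : Tendsto z l atTop) (hyz : Tendsto (fun i ↦ y i / z i) l (𝓝 ρ))
    (hL : Tendsto (fun i ↦ Real.exp (-(y i ^ 2 - z i ^ 2) / 2)) l (𝓝 L)) :
    Tendsto (fun i ↦ gaussianTail (y i) / gaussianTail (z i)) l (𝓝 (L / ρ)) := by
  have hy : Tendsto y l atTop := by
    refine (hz.atTop_mul_pos hρ hyz).congr' ?_
    filter_upwards [hz.eventually_gt_atTop 0] with i hi
    exact mul_div_cancel₀ _ hi.ne'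
  have hequiv := (gaussianTail_isEquivalent.comp_tendsto hy).div
    (gaussianTail_isEquivalent.comp_tendsto hz)
  refine hequiv.symm.tendsto_nhds ((hL.div hyz hρ.ne').congr fun i ↦ ?_)
  simp only [Function.comp_apply, Pi.div_apply]
  rw [← gaussianPDFReal_zero_one_div]
  exact div_div_div_comm _ _ _ _

lemma tendsto_gaussianTail_div_of_sq_sub_sq {ℓ : ℝ} (hz : Tendsto z l atTop)
    (hy : ∀ᶠ i in l, 0 < y i) (hyz : Tendsto (fun i ↦ y i ^ 2 - z i ^ 2) l (𝓝 ℓ)) :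
    Tendsto (fun i ↦ gaussianTail (y i) / gaussianTail (z i)) l (𝓝 (Real.exp (-ℓ / 2))) := by
  have hratio : Tendsto (fun i ↦ y i / z i) l (𝓝 1) := by
    have hsq : Tendsto (fun i ↦ √(1 + (y i ^ 2 - z i ^ 2) / z i ^ 2)) l (𝓝 1) := by
      simpa using ((hyz.div_atTop ((tendsto_pow_atTop two_ne_zero).comp hz)).const_add 1).sqrt
    refine hsq.congr' ?_
    filter_upwards [hz.eventually_gt_atTop 0, hy] with i hzi hyi
    rw [one_add_div (by positivity), add_sub_cancel, ← div_pow, Real.sqrt_sq (by positivity)]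
  simpa using tendsto_gaussianTail_div one_pos hz hratio
    ((Real.continuous_exp.tendsto _).comp (hyz.neg.div_const 2))

end TailRatio

/-! ### First passage of Brownian motion -/

lemma mul_measureReal_preimage_le {Ω α β : Type*} [MeasurableSpace Ω] [MeasurableSpace α]
    [MeasurableSpace β] {P : Measure Ω} [IsFiniteMeasure P] {X : Ω → α} {Y : Ω → β}
    (hX : AEMeasurable X P) (hY : AEMeasurable Y P) (hXY : IndepFun X Y P)
    {S : Set α} (hS : MeasurableSet S) {R : Set (α × β)} (hR : MeasurableSet R) {p : ℝ}
    (hp : ∀ x ∈ S, p ≤ P.real {ω | (x, Y ω) ∈ R}) :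
    p * P.real {ω | X ω ∈ S} ≤ P.real {ω | X ω ∈ S ∧ (X ω, Y ω) ∈ R} := by
  have hfiber : ∀ x ∈ S, ENNReal.ofReal p ≤ (P.map Y) (Prod.mk x ⁻¹' R) := fun x hx ↦ by
    rw [Measure.map_apply_of_aemeasurable hY (hR.preimage measurable_prodMk_left)]
    exact ENNReal.ofReal_le_of_le_toReal (hp x hx)
  have hprod : P {ω | X ω ∈ S ∧ (X ω, Y ω) ∈ R}
      = ∫⁻ x in S, (P.map Y) (Prod.mk x ⁻¹' R) ∂(P.map X) := by
    have hSR : MeasurableSet (S ×ˢ univ ∩ R) := (hS.prod .univ).inter hR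
    have hpre : {ω | X ω ∈ S ∧ (X ω, Y ω) ∈ R}
        = (fun ω ↦ (X ω, Y ω)) ⁻¹' (S ×ˢ univ ∩ R) := by ext; simp
    rw [hpre, ← Measure.map_apply_of_aemeasurable (hX.prodMk hY) hSR,
      (indepFun_iff_map_prod_eq_prod_map_map hX hY).1 hXY, Measure.prod_apply hSR,
      ← lintegral_indicator hS]
    congr with x
    by_cases hx : x ∈ S <;> simp [hx, indicator]
  have hmul : ENNReal.ofReal p * P {ω | X ω ∈ S} ≤ P {ω | X ω ∈ S ∧ (X ω, Y ω) ∈ R} := by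
    rw [hprod]
    calc ENNReal.ofReal p * P (X ⁻¹' S) = ∫⁻ _ in S, ENNReal.ofReal p ∂(P.map X) := by
          rw [setLIntegral_const, Measure.map_apply_of_aemeasurable hX hS]
      _ ≤ _ := setLIntegral_mono' hS hfiber
  calc p * P.real {ω | X ω ∈ S} ≤ (ENNReal.ofReal p * P {ω | X ω ∈ S}).toReal := by
        rw [ENNReal.toReal_mul]
        gcongr
        · exact (le_max_left p 0).trans_eq ENNReal.toReal_ofReal'.symm
        · rfl
    _ ≤ _ := ENNReal.toReal_mono (measure_ne_top _ _) hmul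

section FirstPassage

variable {Ω : Type*} [MeasurableSpace Ω] {P : Measure Ω} {B : ℝ≥0 → Ω → ℝ}

lemma mul_measureReal_first_mem_le (hB : IsPreBrownianReal B P) {t v : ℝ≥0} (htv : t ≤ v)
    {A : ℝ≥0 → Set ℝ} (hA : ∀ r, MeasurableSet (A r)) {S : Set ℝ} (hS : MeasurableSet S)
    {I : Finset ℝ≥0} (hI : ∀ r ∈ I, r < t) {p : ℝ}
    (hp : ∀ y ∈ A t, p ≤ P.real {ω | y + (B v ω - B t ω) ∈ S}) :
    p * P.real {ω | B t ω ∈ A t ∧ ∀ r ∈ I, B r ω ∉ A r}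
      ≤ P.real {ω | (B t ω ∈ A t ∧ ∀ r ∈ I, B r ω ∉ A r) ∧ B v ω ∈ S} := by
  have := hB.isGaussianProcess.isProbabilityMeasure
  let past (ω : Ω) : ℝ × (I → ℝ) := (B t ω, fun r ↦ B r ω)
  have hpast : AEMeasurable past P :=
    (hB.aemeasurable t).prodMk (aemeasurable_pi_lambda _ fun r ↦ hB.aemeasurable r)
  have hindep : IndepFun past (fun ω ↦ B v ω - B t ω) P := by
    have h := (hB.indepFun_shift t).symm.comp
      (φ := fun x ↦ (x ⟨t, self_mem_Iic⟩, fun r : I ↦ x ⟨r, (hI r r.2).le⟩))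
      (by fun_prop) (measurable_pi_apply (v - t))
    simpa only [Function.comp_def, add_tsub_cancel_of_le htv] using h
  have h := mul_measureReal_preimage_le hpast ((hB.aemeasurable v).sub (hB.aemeasurable t)) hindep
    (S := A t ×ˢ univ.pi fun r : I ↦ (A r)ᶜ) (R := {x | x.1.1 + x.2 ∈ S})
    ((hA t).prod (.univ_pi fun r ↦ (hA r).compl)) (hS.preimage (by fun_prop))
    fun x hx ↦ hp x.1 hx.1
  simpa [past] using h

lemma mul_measureReal_exists_mem_finset_le (hB : IsPreBrownianReal B P) {v : ℝ≥0}
    {A : ℝ≥0 → Set ℝ} (hA : ∀ r, MeasurableSet (A r)) {S : Set ℝ} (hS : MeasurableSet S)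
    (I : Finset ℝ≥0) (hI : ∀ r ∈ I, r ≤ v) {p : ℝ}
    (hp : ∀ r ∈ I, ∀ y ∈ A r, p ≤ P.real {ω | y + (B v ω - B r ω) ∈ S}) :
    p * P.real {ω | ∃ r ∈ I, B r ω ∈ A r} ≤ P.real {ω | (∃ r ∈ I, B r ω ∈ A r) ∧ B v ω ∈ S} := by
  have := hB.isGaussianProcess.isProbabilityMeasure
  have hmeas {r : ℝ≥0} {T : Set ℝ} (hT : MeasurableSet T) : NullMeasurableSet {ω | B r ω ∈ T} P :=
    (hB.aemeasurable r).nullMeasurableSet_preimage hT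
  induction I using Finset.induction_on_max with
  | empty => simp
  | insert t I hmax ih =>
    simp only [Finset.forall_mem_insert] at hI hp
    let first : Set Ω := {ω | B t ω ∈ A t ∧ ∀ r ∈ I, B r ω ∉ A r}
    have hfirst : NullMeasurableSet first P := by
      have : first = {ω | B t ω ∈ A t} ∩ ⋂ r ∈ I, {ω | B r ω ∈ A r}ᶜ := by ext; simp [first]
      rw [this]
      exact (hmeas (hA t)).inter (.biInter I.countable_toSet fun r _ ↦ (hmeas (hA r)).compl)
    have hsplit (ω : Ω) :
        (∃ r ∈ insert t I, B r ω ∈ A r) ↔ (∃ r ∈ I, B r ω ∈ A r) ∨ ω ∈ first := by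
      simp only [Finset.exists_mem_insert, first, mem_ofPred_eq]
      grind
    have hdisj : Disjoint {ω | ∃ r ∈ I, B r ω ∈ A r} first :=
      Set.disjoint_left.2 fun ω ⟨r, hr, hrA⟩ hω ↦ hω.2 r hr hrA
    simp only [hsplit, or_and_right, ofPred_or]
    calc p * P.real ({ω | ∃ r ∈ I, B r ω ∈ A r} ∪ first)
        = p * P.real {ω | ∃ r ∈ I, B r ω ∈ A r} + p * P.real first := by
          rw [← mul_add]
          congr 1
          exact measureReal_union₀ hfirst hdisj.aedisjoint
      _ ≤ P.real {ω | (∃ r ∈ I, B r ω ∈ A r) ∧ B v ω ∈ S} + P.real {ω | ω ∈ first ∧ B v ω ∈ S} :=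
          add_le_add (ih hI.2 hp.2) (mul_measureReal_first_mem_le hB hI.1 hA hS hmax hp.1)
      _ = P.real ({ω | (∃ r ∈ I, B r ω ∈ A r) ∧ B v ω ∈ S} ∪ {ω | ω ∈ first ∧ B v ω ∈ S}) :=
          (measureReal_union₀ (hfirst.inter (hmeas hS))
            (hdisj.mono (fun _ h ↦ h.1) (fun _ h ↦ h.1)).aedisjoint).symm

lemma mul_measureReal_exists_lt_mem_le (hB : IsBrownianReal B P) (v : ℝ≥0)
    {V : Set (ℝ≥0 × ℝ)} (hV : IsOpen V) {S : Set ℝ} (hS : MeasurableSet S) {p : ℝ}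
    (hp : ∀ r < v, ∀ y, (r, y) ∈ V → p ≤ P.real {ω | y + (B v ω - B r ω) ∈ S}) :
    p * P.real {ω | ∃ r < v, (r, B r ω) ∈ V}
      ≤ P.real {ω | (∃ r < v, (r, B r ω) ∈ V) ∧ B v ω ∈ S} := by
  have := hB.isGaussianProcess.isProbabilityMeasure
  let I (n : ℕ) : Finset ℝ≥0 :=
    ((Finset.range n).image (TopologicalSpace.denseSeq ℝ≥0)).filter (· < v)
  let visit (n : ℕ) : Set Ω := {ω | ∃ r ∈ I n, (r, B r ω) ∈ V}
  have hI {n : ℕ} {r : ℝ≥0} (hr : r ∈ I n) : r < v := (Finset.mem_filter.1 hr).2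
  have hI_mono : Monotone I := fun m n hmn ↦
    Finset.filter_subset_filter _ (Finset.image_subset_image (Finset.range_mono hmn))
  have hvisit_mono : Monotone visit := fun m n hmn ω ⟨r, hr, hrV⟩ ↦ ⟨r, hI_mono hmn hr, hrV⟩
  have hvisit : {ω | ∃ r < v, (r, B r ω) ∈ V} =ᵐ[P] ⋃ n, visit n := by
    refine eventuallyEq_set.2 ?_
    filter_upwards [hB.cont] with ω hω
    refine Iff.trans ⟨fun ⟨r, hr, hrV⟩ ↦ ?_, fun ⟨n, r, hr, hrV⟩ ↦ ⟨r, hI hr, hrV⟩⟩ mem_iUnion.symm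
    have hopen : IsOpen {r | r < v ∧ (r, B r ω) ∈ V} :=
      isOpen_Iio.inter (hV.preimage (continuous_id.prodMk hω))
    obtain ⟨k, hkv, hkV⟩ :=
      (TopologicalSpace.denseRange_denseSeq ℝ≥0).exists_mem_open hopen ⟨r, hr, hrV⟩
    exact ⟨k + 1, _, Finset.mem_filter.2 ⟨Finset.mem_image_of_mem _ (by simp), hkv⟩, hkV⟩
  have hlim : Tendsto (fun n ↦ P.real (visit n)) atTop
      (𝓝 (P.real {ω | ∃ r < v, (r, B r ω) ∈ V})) := by
    rw [measureReal_congr hvisit]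
    exact (ENNReal.tendsto_toReal (measure_ne_top _ _)).comp
      (tendsto_measure_iUnion_atTop hvisit_mono)
  refine le_of_tendsto (hlim.const_mul p) (Eventually.of_forall fun n ↦ ?_)
  calc p * P.real (visit n) ≤ P.real {ω | ω ∈ visit n ∧ B v ω ∈ S} :=
        mul_measureReal_exists_mem_finset_le hB.toIsPreBrownianReal (A := fun r ↦ {y | (r, y) ∈ V})
          (fun r ↦ hV.measurableSet.preimage measurable_prodMk_left) hS (I n)
          (fun r hr ↦ (hI hr).le) (fun r hr y hy ↦ hp r (hI hr) y hy)
    _ ≤ _ := measureReal_mono fun ω ↦ And.imp_left fun ⟨r, hr, hrV⟩ ↦ ⟨r, hI hr, hrV⟩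

lemma measureReal_sub_le_neg_le (hB : IsPreBrownianReal B P) {r v : ℝ≥0} (hrv : r ≤ v)
    {c z : ℝ} (hc : 0 < c) (hcz : z * √(v - r) ≤ c) :
    P.real {ω | B v ω - B r ω ≤ -c} ≤ gaussianTail z := by
  have hvar : (nndist (v : ℝ) r : ℝ) = v - r := by
    rw [coe_nndist, Real.dist_eq, abs_of_nonneg (sub_nonneg.2 (NNReal.coe_le_coe.2 hrv))]
  have hlaw : HasLaw (B v - B r) (gaussianReal 0 (nndist (v : ℝ) r)) P := hB.hasLaw_sub v r
  calc P.real {ω | B v ω - B r ω ≤ -c} = (gaussianReal 0 (nndist (v : ℝ) r)).real (Iic (-c)) := by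
        rw [← hlaw.map_eq, map_measureReal_apply_of_aemeasurable hlaw.aemeasurable
          measurableSet_Iic]
        rfl
    _ ≤ gaussianTail z := by
        rw [gaussianReal_real_Iic_neg]
        exact gaussianReal_real_Ici_le hc (by rwa [hvar])

/-- After crossing `a + c * √(h - r)`, ending below `a + (c - d) * √(h - v)` requires a decrease
by `d` standard deviations, whatever the crossing time `r`. -/
lemma mul_measureReal_sqrt_boundary_le (hB : IsBrownianReal B P) {v h : ℝ≥0} (hvh : v ≤ h)
    {c d : ℝ} (hd : 0 < d) (hdc : d ≤ c) (a : ℝ) :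
    (1 - gaussianTail d) * P.real {ω | ∃ r < v, c * √(h - r) < B r ω - a}
      ≤ P.real {ω | (∃ r < v, c * √(h - r) < B r ω - a) ∧ (c - d) * √(h - v) ≤ B v ω - a} := by
  have := hB.isGaussianProcess.isProbabilityMeasure
  have hV : IsOpen {x : ℝ≥0 × ℝ | c * √(h - x.1) < x.2 - a} :=
    isOpen_lt (by fun_prop) (by fun_prop)
  have hS : MeasurableSet {y : ℝ | (c - d) * √(h - v) ≤ y - a} :=
    (isClosed_le (by fun_prop) (by fun_prop)).measurableSet
  refine mul_measureReal_exists_lt_mem_le hB v hV hS fun r hrv y hy ↦ ?_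
  replace hy : c * √(h - r) < y - a := hy
  have hrv' : (r : ℝ) < v := hrv
  have hvh' : (v : ℝ) ≤ h := hvh
  have hsub : {ω | (c - d) * √(h - v) ≤ y + (B v ω - B r ω) - a}ᶜ
      ⊆ {ω | B v ω - B r ω ≤ -(d * √(h - r))} := fun ω hω ↦ by
    have hcd : (c - d) * √(h - v) ≤ (c - d) * √(h - r) := by gcongr
    simp only [mem_compl_iff, mem_ofPred_eq, not_le] at hω ⊢
    linarith
  have hmeas : NullMeasurableSet {ω | (c - d) * √(h - v) ≤ y + (B v ω - B r ω) - a} P := by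
    have := hB.aemeasurable
    exact nullMeasurableSet_le (by fun_prop) (by fun_prop)
  have hcompl := (measureReal_mono hsub).trans (measureReal_sub_le_neg_le hB.toIsPreBrownianReal
    hrv.le (z := d) (mul_pos hd (Real.sqrt_pos.2 (by linarith))) (by gcongr))
  rw [probReal_compl_eq_one_sub₀ hmeas] at hcompl
  exact sub_le_comm.1 hcompl

/-- After crossing `a - c * √(h - r)`, ending above `a` requires an increase by `c` standard
deviations. -/
lemma measureReal_sqrt_boundary_below_inter_le (hB : IsBrownianReal B P) {v h : ℝ≥0} (hvh : v ≤ h)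
    {c : ℝ} (hc : 0 < c) (a : ℝ) :
    P.real {ω | (∃ r < v, B r ω - a < -(c * √(h - r))) ∧ 0 < B v ω - a} ≤ gaussianTail c := by
  have := hB.isGaussianProcess.isProbabilityMeasure
  let crossing : Set Ω := {ω | ∃ r < v, B r ω - a < -(c * √(h - r))}
  have hreflect : (1 - gaussianTail c) * P.real crossing
      ≤ P.real (crossing ∩ {ω | B v ω - a ≤ 0}) := by
    have hflip (x y : ℝ) : y < -x - -a ↔ x - a < -y := by constructor <;> intro <;> linarith
    have hflip' (x : ℝ) : 0 ≤ -x - -a ↔ x - a ≤ 0 := by constructor <;> intro <;> linarith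
    have hneg := mul_measureReal_sqrt_boundary_le hB.neg hvh hc le_rfl (-a)
    simp only [Pi.neg_apply, sub_self, zero_mul, hflip, hflip'] at hneg
    exact hneg
  have hmeas : NullMeasurableSet {ω | B v ω - a ≤ 0} P := by
    have := hB.aemeasurable
    exact nullMeasurableSet_le (by fun_prop) (by fun_prop)
  have hsplit := measureReal_inter_add_sdiff₀ (μ := P) (s := crossing) hmeas
  have hdiff : crossing \ {ω | B v ω - a ≤ 0}
      = {ω | (∃ r < v, B r ω - a < -(c * √(h - r))) ∧ 0 < B v ω - a} := by
    ext
    simp [crossing]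
  rw [hdiff] at hsplit
  have hle : gaussianTail c * P.real crossing ≤ gaussianTail c :=
    mul_le_of_le_one_right (gaussianTail_nonneg c) measureReal_le_one
  linarith

end FirstPassage

/-! ### Exit of a path from an interval -/

/-- The times at which the path `x` is at one of the endpoints of the interval `(a, b)`. -/
def exitTimes (x : ℝ → ℝ) (a b : ℝ) : Set ℝ := {t | 0 ≤ t ∧ (x t = a ∨ x t = b)}

/-- The first exit time of the path `x` from `(a, b)`; it is `0` if the path never exits. -/
noncomputable def exitTime (x : ℝ → ℝ) (a b : ℝ) : ℝ := sInf (exitTimes x a b)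

/-- The path `x` exits from `(a, b)`, and it does so at the upper endpoint `b`. -/
def ExitsUpward (x : ℝ → ℝ) (a b : ℝ) : Prop :=
  (exitTimes x a b).Nonempty ∧ x (exitTime x a b) = b

section Exit

variable {x y : ℝ → ℝ} {a b s t : ℝ}

lemma exitTime_nonneg : 0 ≤ exitTime x a b := Real.sInf_nonneg fun _ ht ↦ ht.1

lemma exitTime_le (ht : t ∈ exitTimes x a b) : exitTime x a b ≤ t := csInf_le ⟨0, fun _ h ↦ h.1⟩ ht

lemma exitTimes_congr (h : EqOn x y (Ici 0)) : exitTimes x a b = exitTimes y a b := by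
  ext t
  exact and_congr_right fun ht ↦ by rw [h ht]

lemma exitTime_congr (h : EqOn x y (Ici 0)) : exitTime x a b = exitTime y a b := by
  rw [exitTime, exitTimes_congr h, exitTime]

lemma exitsUpward_congr (h : EqOn x y (Ici 0)) : ExitsUpward x a b ↔ ExitsUpward y a b := by
  rw [ExitsUpward, ExitsUpward, exitTimes_congr h, exitTime_congr h, h exitTime_nonneg]

lemma exitTime_mem_exitTimes (hx : ContinuousOn x (Ici 0)) (hne : (exitTimes x a b).Nonempty) :
    exitTime x a b ∈ exitTimes x a b := by
  have hclosed : IsClosed (exitTimes x a b) :=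
    hx.preimage_isClosed_of_isClosed isClosed_Ici (isClosed_singleton.union isClosed_singleton)
  exact hclosed.csInf_mem hne ⟨0, fun _ h ↦ h.1⟩

lemma exitsUpward_and_exitTime_le (hx : ContinuousOn x (Ici 0)) (ht : 0 ≤ t) (hxt : x t = b)
    (havoid : ∀ u ∈ Icc 0 t, x u ≠ a) : ExitsUpward x a b ∧ exitTime x a b ≤ t := by
  have hmem : t ∈ exitTimes x a b := ⟨ht, .inr hxt⟩
  have hexit := exitTime_mem_exitTimes hx ⟨t, hmem⟩
  exact ⟨⟨⟨t, hmem⟩, hexit.2.resolve_left (havoid _ ⟨hexit.1, exitTime_le hmem⟩)⟩, exitTime_le hmem⟩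

lemma exitsUpward_and_exitTime_le_of_le (hx : ContinuousOn x (Ici 0)) (hx0 : x 0 ≤ b) (ht : 0 ≤ t)
    (hbt : b ≤ x t) (havoid : ∀ u ∈ Icc 0 t, x u ≠ a) :
    ExitsUpward x a b ∧ exitTime x a b ≤ t := by
  obtain ⟨r, hr, hxr⟩ := intermediate_value_Icc ht (hx.mono Icc_subset_Ici_self) ⟨hx0, hbt⟩
  have h := exitsUpward_and_exitTime_le hx hr.1 hxr fun u hu ↦ havoid u ⟨hu.1, hu.2.trans hr.2⟩
  exact ⟨h.1, h.2.trans hr.2⟩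

lemma exitsUpward_and_exitTime_lt_iff_exists_rat (hx : ContinuousOn x (Ici 0)) (hab : a < b) :
    (ExitsUpward x a b ∧ exitTime x a b < s) ↔
      ∃ ρ : ℚ, (ρ : ℝ) < s ∧ (∃ t : Icc (0 : ℝ) ρ, x t = b) ∧ ¬ ∃ t : Icc (0 : ℝ) ρ, x t = a := by
  constructor
  · rintro ⟨⟨hne, hval⟩, hlt⟩
    have hmem := exitTime_mem_exitTimes hx hne
    have hafter : ∀ᶠ t in 𝓝[≥] (exitTime x a b), a < x t :=
      ((hx _ hmem.1).mono (Ici_subset_Ici.2 hmem.1)).eventually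
        (lt_mem_nhds (by rwa [hval]))
    obtain ⟨u, hu, hua⟩ := mem_nhdsGE_iff_exists_Ico_subset.1 hafter
    obtain ⟨ρ, hρ, hρ'⟩ := exists_rat_btwn (lt_min hlt hu)
    obtain ⟨hρs, hρu⟩ := lt_min_iff.1 hρ'
    refine ⟨ρ, hρs, ⟨⟨_, hmem.1, hρ.le⟩, hval⟩, fun ⟨⟨t, ht⟩, hxt⟩ ↦ ?_⟩
    exact (hua ⟨exitTime_le ⟨ht.1, .inl hxt⟩, ht.2.trans_lt hρu⟩ : a < x t).ne' hxt
  · rintro ⟨ρ, hρ, ⟨⟨t, ht⟩, hxt⟩, havoid⟩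
    have h := exitsUpward_and_exitTime_le hx ht.1 hxt
      fun u hu hxu ↦ havoid ⟨⟨u, hu.1, hu.2.trans ht.2⟩, hxu⟩
    exact ⟨h.1, h.2.trans_lt (ht.2.trans_lt hρ)⟩

end Exit

section Measurability

variable {Ω : Type*} [MeasurableSpace Ω] {P : Measure Ω}

lemma nullMeasurableSet_exists_eq {T E : Type*} [TopologicalSpace T] [CompactSpace T]
    [TopologicalSpace.SeparableSpace T] [MetricSpace E] [MeasurableSpace E]
    [OpensMeasurableSpace E] {g : T → Ω → E} (hg : ∀ t, AEMeasurable (g t) P)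
    (hcont : ∀ᵐ ω ∂P, Continuous (g · ω)) (c : E) :
    NullMeasurableSet {ω | ∃ t, g t ω = c} P := by
  cases isEmpty_or_nonempty T
  · simp
  let d : ℕ → T := TopologicalSpace.denseSeq T
  have happrox : NullMeasurableSet
      (⋂ n : ℕ, ⋃ k : ℕ, g (d k) ⁻¹' Metric.ball c (1 / ((n : ℝ) + 1))) P :=
    .iInter fun n ↦ .iUnion fun k ↦
      (hg (d k)).nullMeasurableSet_preimage Metric.isOpen_ball.measurableSet
  refine happrox.congr (eventuallyEq_set.2 ?_)
  filter_upwards [hcont] with ω hω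
  have hclosure : closure (range fun k ↦ g (d k) ω) = range (g · ω) := by
    refine (closure_minimal (range_comp_subset_range d (g · ω))
      (isCompact_range hω).isClosed).antisymm ?_
    have h := hω.range_subset_closure_image_dense (TopologicalSpace.denseRange_denseSeq T)
    rwa [← range_comp] at h
  have hmem : (∀ n : ℕ, ∃ k : ℕ, dist c (g (d k) ω) < 1 / ((n : ℝ) + 1)) ↔ ∃ t, g t ω = c := by
    rw [← Metric.mem_closure_range_iff_nat, hclosure, mem_range]
  simpa only [mem_ofPred_eq, mem_iInter, mem_iUnion, mem_preimage, Metric.mem_ball'] using hmem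

variable {g : ℝ → Ω → ℝ} {a b : ℝ}

lemma nullMeasurableSet_exitsUpward_and_exitTime_lt (hg : ∀ t, AEMeasurable (g t) P)
    (hcont : ∀ᵐ ω ∂P, ContinuousOn (g · ω) (Ici 0)) (hab : a < b) (s : ℝ) :
    NullMeasurableSet {ω | ExitsUpward (g · ω) a b ∧ exitTime (g · ω) a b < s} P := by
  have hvisit (ρ : ℚ) (c : ℝ) : NullMeasurableSet {ω | ∃ t : Icc (0 : ℝ) ρ, g t ω = c} P := by
    refine nullMeasurableSet_exists_eq (T := Icc (0 : ℝ) ρ) (fun t ↦ hg t) ?_ c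
    filter_upwards [hcont] with ω hω
    exact continuousOn_iff_continuous_domRestrict.1 (hω.mono Icc_subset_Ici_self)
  have hrat : NullMeasurableSet (⋃ (ρ : ℚ) (_ : (ρ : ℝ) < s),
      {ω | ∃ t : Icc (0 : ℝ) ρ, g t ω = b} ∩ {ω | ∃ t : Icc (0 : ℝ) ρ, g t ω = a}ᶜ) P :=
    .iUnion fun ρ ↦ .iUnion fun _ ↦ (hvisit ρ b).inter (hvisit ρ a).compl
  refine hrat.congr (eventuallyEq_set.2 ?_)
  filter_upwards [hcont] with ω hω
  simpa only [mem_iUnion, mem_inter_iff, mem_compl_iff, mem_ofPred_eq, exists_prop] using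
    (exitsUpward_and_exitTime_lt_iff_exists_rat hω hab).symm

lemma nullMeasurableSet_exitsUpward (hg : ∀ t, AEMeasurable (g t) P)
    (hcont : ∀ᵐ ω ∂P, ContinuousOn (g · ω) (Ici 0)) (hab : a < b) :
    NullMeasurableSet {ω | ExitsUpward (g · ω) a b} P := by
  have hUnion : {ω | ExitsUpward (g · ω) a b}
      = ⋃ n : ℕ, {ω | ExitsUpward (g · ω) a b ∧ exitTime (g · ω) a b < n} := by
    ext ω
    simpa using fun _ ↦ exists_nat_gt (exitTime (g · ω) a b)
  rw [hUnion]
  exact .iUnion fun n ↦ nullMeasurableSet_exitsUpward_and_exitTime_lt hg hcont hab n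

end Measurability

/-! ### The linear diffusion -/

/-- The variance `∫₀ᵗ e^{-2λs} ds` of the stochastic integral `∫₀ᵗ e^{-λs} dW(s)`, at which the
Brownian motion is evaluated. -/
noncomputable def noiseClock (lam t : ℝ) : ℝ≥0 :=
  ((1 - Real.exp (-(2 * lam * t))) / (2 * lam)).toNNReal

/-- The variance `1 / (2λ)` of `∫₀^∞ e^{-λs} dW(s)`, the limit of `noiseClock lam t` as `t → ∞`. -/
noncomputable def noiseHorizon (lam : ℝ) : ℝ≥0 := (1 / (2 * lam)).toNNReal

/-- The path of the diffusion `dX = λ X dt + ε dW`, `X(0) = x₀`, driven by the time-changed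
path `b`. -/
noncomputable def linearDiffusion (lam x₀ ε : ℝ) (b : ℝ≥0 → ℝ) (t : ℝ) : ℝ :=
  Real.exp (lam * t) * (x₀ + ε * b (noiseClock lam t))

/-- The probability that the total noise `ε ∫₀^∞ e^{-λs} dW(s)`, that is, the centred limit of
`e^{-λt} X(t)`, is at least `q`. -/
noncomputable def noiseTail (lam ε q : ℝ) : ℝ := gaussianTail (q / (ε * √(noiseHorizon lam)))

section Clock

variable {lam : ℝ}

lemma coe_noiseHorizon (hlam : 0 < lam) : (noiseHorizon lam : ℝ) = 1 / (2 * lam) :=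
  Real.coe_toNNReal _ (by positivity)

lemma noiseHorizon_pos (hlam : 0 < lam) : 0 < noiseHorizon lam :=
  Real.toNNReal_pos.2 (by positivity)

lemma noiseClock_zero (lam : ℝ) : noiseClock lam 0 = 0 := by simp [noiseClock]

@[fun_prop]
lemma continuous_noiseClock (lam : ℝ) : Continuous (noiseClock lam) := by
  unfold noiseClock
  fun_prop

lemma coe_noiseClock (hlam : 0 < lam) {t : ℝ} (ht : 0 ≤ t) :
    (noiseClock lam t : ℝ) = (1 - Real.exp (-(2 * lam * t))) / (2 * lam) := by
  refine Real.coe_toNNReal _ (div_nonneg ?_ (by positivity))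
  rw [sub_nonneg, Real.exp_le_one_iff, neg_nonpos]
  positivity

lemma noiseClock_lt_noiseClock (hlam : 0 < lam) {s t : ℝ} (ht : 0 < t) (hst : s < t) :
    noiseClock lam s < noiseClock lam t := by
  refine (Real.toNNReal_lt_toNNReal_iff ?_).2 (by gcongr)
  refine div_pos ?_ (by positivity)
  rw [sub_pos, Real.exp_lt_one_iff, neg_lt_zero]
  positivity

lemma noiseClock_pos (hlam : 0 < lam) {t : ℝ} (ht : 0 < t) : 0 < noiseClock lam t :=
  (noiseClock_zero lam).symm.trans_lt (noiseClock_lt_noiseClock hlam ht ht)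

lemma noiseClock_lt_noiseHorizon (hlam : 0 < lam) (t : ℝ) :
    noiseClock lam t < noiseHorizon lam := by
  refine (Real.toNNReal_lt_toNNReal_iff (by positivity)).2 ?_
  gcongr
  exact sub_lt_self _ (Real.exp_pos _)

lemma sqrt_noiseHorizon_sub_noiseClock (hlam : 0 < lam) {t : ℝ} (ht : 0 ≤ t) :
    √(noiseHorizon lam - noiseClock lam t : ℝ) = Real.exp (-(lam * t)) * √(noiseHorizon lam) := by
  have hsq : (noiseHorizon lam - noiseClock lam t : ℝ)
      = Real.exp (-(lam * t)) ^ 2 * noiseHorizon lam := by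
    rw [coe_noiseHorizon hlam, coe_noiseClock hlam ht, ← Real.exp_nat_mul]
    ring_nf
  rw [hsq, Real.sqrt_mul (sq_nonneg _), Real.sqrt_sq (Real.exp_pos _).le]

end Clock

section Path

variable {lam x₀ ε : ℝ} {b : ℝ≥0 → ℝ} {q t : ℝ}

lemma linearDiffusion_zero (hb : b 0 = 0) : linearDiffusion lam x₀ ε b 0 = x₀ := by
  simp [linearDiffusion, noiseClock_zero, hb]

lemma continuous_linearDiffusion (lam x₀ ε : ℝ) (hb : Continuous b) :
    Continuous (linearDiffusion lam x₀ ε b) := by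
  unfold linearDiffusion
  fun_prop

lemma le_linearDiffusion_iff :
    q ≤ linearDiffusion lam x₀ ε b t ↔
      q * Real.exp (-(lam * t)) ≤ x₀ + ε * b (noiseClock lam t) := by
  rw [linearDiffusion, Real.exp_neg, ← div_eq_mul_inv, div_le_iff₀' (Real.exp_pos _)]

lemma lt_linearDiffusion_iff (hlam : 0 < lam) (hε : 0 < ε) (ht : 0 ≤ t) :
    q < linearDiffusion lam x₀ ε b t ↔
      q / (ε * √(noiseHorizon lam)) * √(noiseHorizon lam - noiseClock lam t)
        < b (noiseClock lam t) - -x₀ / ε := by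
  have hσ : 0 < √(noiseHorizon lam : ℝ) := Real.sqrt_pos.2 (noiseHorizon_pos hlam)
  have hscale : q / (ε * √(noiseHorizon lam)) * √(noiseHorizon lam - noiseClock lam t)
      = q * Real.exp (-(lam * t)) / ε := by
    rw [sqrt_noiseHorizon_sub_noiseClock hlam ht]
    field_simp
  have hshift : b (noiseClock lam t) - -x₀ / ε = (x₀ + ε * b (noiseClock lam t)) / ε := by
    field_simp
    ring
  rw [hscale, hshift, div_lt_div_iff_of_pos_right hε, linearDiffusion, Real.exp_neg,
    ← div_eq_mul_inv, div_lt_iff₀' (Real.exp_pos _)]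

lemma linearDiffusion_neg : linearDiffusion lam (-x₀) ε (-b) t = -linearDiffusion lam x₀ ε b t := by
  simp only [linearDiffusion, Pi.neg_apply]
  ring

lemma linearDiffusion_lt_neg_iff (hlam : 0 < lam) (hε : 0 < ε) (ht : 0 ≤ t) :
    linearDiffusion lam x₀ ε b t < -q ↔ b (noiseClock lam t) - -x₀ / ε
      < -(q / (ε * √(noiseHorizon lam)) * √(noiseHorizon lam - noiseClock lam t)) := by
  rw [lt_neg, ← linearDiffusion_neg, lt_linearDiffusion_iff hlam hε ht, lt_neg]
  simp only [Pi.neg_apply, neg_neg, neg_sub, neg_div]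
  ring_nf

end Path

section ExitProbability

variable {Ω : Type*} [MeasurableSpace Ω] {P : Measure Ω} {B : ℝ≥0 → Ω → ℝ} {lam x₀ ε q : ℝ}

lemma ae_continuousOn_linearDiffusion (hB : IsBrownianReal B P) (lam x₀ ε : ℝ) :
    ∀ᵐ ω ∂P, ContinuousOn (linearDiffusion lam x₀ ε (B · ω)) (Ici 0) := by
  filter_upwards [hB.cont] with ω hω using (continuous_linearDiffusion lam x₀ ε hω).continuousOn

lemma aemeasurable_linearDiffusion (hB : IsPreBrownianReal B P) (lam x₀ ε t : ℝ) :
    AEMeasurable (fun ω ↦ linearDiffusion lam x₀ ε (B · ω) t) P :=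
  (((hB.aemeasurable _).const_mul ε).const_add x₀).const_mul _

lemma measureReal_le_add_mul (hB : IsPreBrownianReal B P) {v : ℝ≥0} (hv : v ≠ 0) (hε : 0 < ε)
    (x₀ θ : ℝ) : P.real {ω | θ ≤ x₀ + ε * B v ω} = gaussianTail ((θ - x₀) / (ε * √v)) := by
  have hlaw : HasLaw (B v) (gaussianReal 0 v) P := hB.hasLaw_eval v
  have hpre : {ω | θ ≤ x₀ + ε * B v ω} = B v ⁻¹' Ici ((θ - x₀) / ε) := by
    ext ω
    simp only [mem_ofPred_eq, mem_preimage, mem_Ici, div_le_iff₀' hε, sub_le_iff_le_add']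
  rw [hpre, ← map_measureReal_apply_of_aemeasurable hlaw.aemeasurable measurableSet_Ici,
    hlaw.map_eq, gaussianReal_real_Ici hv, div_div]

lemma mul_measureReal_exists_lt_linearDiffusion_le (hB : IsBrownianReal B P) (hlam : 0 < lam)
    (hε : 0 < ε) {v : ℝ≥0} (hv : v ≤ noiseHorizon lam) {δ : ℝ} (hδ : 0 < δ) (hδq : δ ≤ q)
    (x₀ : ℝ) :
    (1 - noiseTail lam ε δ) *
        P.real {ω | ∃ t ≥ 0, noiseClock lam t < v ∧ q < linearDiffusion lam x₀ ε (B · ω) t}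
      ≤ P.real {ω | (q - δ) * (√(noiseHorizon lam - v) / √(noiseHorizon lam))
          ≤ x₀ + ε * B v ω} := by
  have := hB.isGaussianProcess.isProbabilityMeasure
  have hσ : 0 < √(noiseHorizon lam : ℝ) := Real.sqrt_pos.2 (noiseHorizon_pos hlam)
  have hscale (ω : Ω) :
      (q / (ε * √(noiseHorizon lam)) - δ / (ε * √(noiseHorizon lam))) * √(noiseHorizon lam - v)
        ≤ B v ω - -x₀ / ε ↔
      (q - δ) * (√(noiseHorizon lam - v) / √(noiseHorizon lam)) ≤ x₀ + ε * B v ω := by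
    rw [← mul_le_mul_iff_right₀ hε]
    field_simp
    rw [sub_neg_eq_add, add_comm x₀]
  refine le_trans (mul_le_mul_of_nonneg_left (measureReal_mono ?_)
    (sub_nonneg.2 (gaussianTail_le_one _))) ((mul_measureReal_sqrt_boundary_le hB hv
      (c := q / (ε * √(noiseHorizon lam))) (d := δ / (ε * √(noiseHorizon lam)))
      (by positivity) (by gcongr) (-x₀ / ε)).trans (measureReal_mono ?_))
  · rintro ω ⟨t, ht, htv, hqt⟩
    exact ⟨_, htv, (lt_linearDiffusion_iff hlam hε ht).1 hqt⟩
  · exact fun ω hω ↦ (hscale ω).1 hω.2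

variable {qm qp s : ℝ}

lemma mul_measureReal_exitsUpward_lt_le (hB : IsBrownianReal B P) (hlam : 0 < lam) (hε : 0 < ε)
    (hs : 0 ≤ s) {δ : ℝ} (hδ : 0 < δ) (hδq : δ ≤ q) (hq : q < qp) (x₀ qm : ℝ) :
    (1 - noiseTail lam ε δ) * P.real {ω | ExitsUpward (linearDiffusion lam x₀ ε (B · ω)) qm qp ∧
        exitTime (linearDiffusion lam x₀ ε (B · ω)) qm qp < s}
      ≤ P.real {ω | q - δ ≤ linearDiffusion lam x₀ ε (B · ω) s} := by
  have := hB.isGaussianProcess.isProbabilityMeasure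
  have hσ : 0 < √(noiseHorizon lam : ℝ) := Real.sqrt_pos.2 (noiseHorizon_pos hlam)
  have h := mul_measureReal_exists_lt_linearDiffusion_le hB hlam hε
    (noiseClock_lt_noiseHorizon hlam s).le hδ hδq x₀
  rw [sqrt_noiseHorizon_sub_noiseClock hlam hs, mul_div_cancel_right₀ _ hσ.ne'] at h
  simp only [le_linearDiffusion_iff]
  refine (mul_le_mul_of_nonneg_left (measureReal_mono ?_)
    (sub_nonneg.2 (gaussianTail_le_one _))).trans h
  exact fun ω ⟨hup, hlt⟩ ↦ ⟨_, exitTime_nonneg,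
    noiseClock_lt_noiseClock hlam (exitTime_nonneg.trans_lt hlt) hlt, hup.2.symm ▸ hq⟩

lemma mul_measureReal_exitsUpward_le (hB : IsBrownianReal B P) (hlam : 0 < lam) (hε : 0 < ε)
    {δ : ℝ} (hδ : 0 < δ) (hδqp : δ < qp) (x₀ qm : ℝ) :
    (1 - noiseTail lam ε δ) * P.real {ω | ExitsUpward (linearDiffusion lam x₀ ε (B · ω)) qm qp}
      ≤ noiseTail lam ε (-x₀) := by
  have := hB.isGaussianProcess.isProbabilityMeasure
  have h := mul_measureReal_exists_lt_linearDiffusion_le hB hlam hε le_rfl hδ le_rfl x₀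
  rw [sub_self, zero_mul, measureReal_le_add_mul hB.toIsPreBrownianReal (noiseHorizon_pos hlam).ne'
    hε, zero_sub] at h
  refine (mul_le_mul_of_nonneg_left (measureReal_mono ?_)
    (sub_nonneg.2 (gaussianTail_le_one _))).trans h
  exact fun ω hup ↦ ⟨_, exitTime_nonneg, noiseClock_lt_noiseHorizon hlam _, hup.2.symm ▸ hδqp⟩

lemma measureReal_linearDiffusion_lt_neg_inter_le (hB : IsBrownianReal B P) (hlam : 0 < lam)
    (hε : 0 < ε) (hq : 0 < q) (hs : 0 < s) (x₀ : ℝ) :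
    P.real {ω | (∃ t ∈ Ico 0 s, linearDiffusion lam x₀ ε (B · ω) t < -q) ∧
        0 < linearDiffusion lam x₀ ε (B · ω) s} ≤ noiseTail lam ε q := by
  have := hB.isGaussianProcess.isProbabilityMeasure
  have hσ : 0 < √(noiseHorizon lam : ℝ) := Real.sqrt_pos.2 (noiseHorizon_pos hlam)
  refine (measureReal_mono ?_).trans (measureReal_sqrt_boundary_below_inter_le hB
    (noiseClock_lt_noiseHorizon hlam s).le (c := q / (ε * √(noiseHorizon lam))) (by positivity)
    (-x₀ / ε))
  rintro ω ⟨⟨t, ht, hqt⟩, hpos⟩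
  refine ⟨⟨_, noiseClock_lt_noiseClock hlam hs ht.2,
    (linearDiffusion_lt_neg_iff hlam hε ht.1).1 hqt⟩, ?_⟩
  simpa using (lt_linearDiffusion_iff hlam hε hs.le).1 hpos

lemma measureReal_le_exitsUpward_lt_add (hB : IsBrownianReal B P) (hlam : 0 < lam) (hε : 0 < ε)
    (hx₀ : x₀ ≤ qp) (hqp : 0 < qp) (hq : 0 < q) (hqm : qm < -q) {s' : ℝ} (hs' : 0 < s')
    (hs : s' < s) :
    P.real {ω | qp ≤ linearDiffusion lam x₀ ε (B · ω) s'}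
      ≤ P.real {ω | ExitsUpward (linearDiffusion lam x₀ ε (B · ω)) qm qp ∧
          exitTime (linearDiffusion lam x₀ ε (B · ω)) qm qp < s} + noiseTail lam ε q := by
  have := hB.isGaussianProcess.isProbabilityMeasure
  refine le_trans ?_ (add_le_add_right
    (measureReal_linearDiffusion_lt_neg_inter_le hB hlam hε hq hs' x₀) _)
  refine le_trans ?_ (measureReal_union_le _ _)
  refine ENNReal.toReal_mono (measure_ne_top _ _) (measure_mono_ae ?_)
  filter_upwards [hB.cont, hB.eval_zero_ae_eq_zero] with ω hcont hzero
    (hend : qp ≤ linearDiffusion lam x₀ ε (B · ω) s')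
  by_cases hlow : ∃ t ∈ Ico 0 s', linearDiffusion lam x₀ ε (B · ω) t < -q
  · exact .inr ⟨hlow, hqp.trans_le hend⟩
  · push Not at hlow
    have havoid : ∀ t ∈ Icc 0 s', linearDiffusion lam x₀ ε (B · ω) t ≠ qm := fun t ht ↦ by
      obtain hlt | rfl := ht.2.lt_or_eq
      · exact (hqm.trans_le (hlow t ⟨ht.1, hlt⟩)).ne'
      · exact (hqm.trans ((neg_neg_of_pos hq).trans (hqp.trans_le hend))).ne'
    have hexit := exitsUpward_and_exitTime_le_of_le
      (continuous_linearDiffusion lam x₀ ε hcont).continuousOn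
      ((linearDiffusion_zero hzero).trans_le hx₀) hs'.le hend havoid
    exact .inl ⟨hexit.1, hexit.2.trans_lt hs⟩

end ExitProbability

/-! ### Small-noise asymptotics -/

lemma tendsto_of_approx_le_of_approx_ge {ι κ κ' : Type*} {l : Filter ι} {u : Filter κ} [u.NeBot]
    {v : Filter κ'} [v.NeBot] {f : ι → ℝ} {g : κ → ι → ℝ} {g' : κ' → ι → ℝ} {G : κ → ℝ}
    {G' : κ' → ℝ} {a : ℝ}
    (hg : ∀ᶠ k in u, g k ≤ᶠ[l] f) (hgG : ∀ᶠ k in u, Tendsto (g k) l (𝓝 (G k)))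
    (hG : Tendsto G u (𝓝 a))
    (hg' : ∀ᶠ k in v, f ≤ᶠ[l] g' k) (hgG' : ∀ᶠ k in v, Tendsto (g' k) l (𝓝 (G' k)))
    (hG' : Tendsto G' v (𝓝 a)) : Tendsto f l (𝓝 a) := by
  refine tendsto_order.2 ⟨fun c hc ↦ ?_, fun c hc ↦ ?_⟩
  · obtain ⟨k, hkf, hk, hck⟩ := (hg.and (hgG.and (hG.eventually (lt_mem_nhds hc)))).exists
    filter_upwards [hkf, hk.eventually (lt_mem_nhds hck)] with i hif hci using hci.trans_le hif
  · obtain ⟨k, hkf, hk, hck⟩ := (hg'.and (hgG'.and (hG'.eventually (gt_mem_nhds hc)))).exists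
    filter_upwards [hkf, hk.eventually (gt_mem_nhds hck)] with i hif hci using hif.trans_lt hci

section NoiseTail

variable {lam a b : ℝ}

lemma tendsto_div_mul_nhdsGT_zero {c σ : ℝ} (hc : 0 < c) (hσ : 0 < σ) :
    Tendsto (fun ε : ℝ ↦ c / (ε * σ)) (𝓝[>] 0) atTop := by
  simp only [mul_comm _ σ, ← div_div, div_eq_mul_inv (c / σ)]
  exact tendsto_inv_nhdsGT_zero.const_mul_atTop (by positivity)

lemma noiseTail_pos (hlam : 0 < lam) {ε : ℝ} (hε : 0 < ε) (ha : 0 < a) :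
    0 < noiseTail lam ε a := by
  have hσ : 0 < √(noiseHorizon lam : ℝ) := Real.sqrt_pos.2 (noiseHorizon_pos hlam)
  exact gaussianTail_pos (by positivity)

lemma tendsto_one_sub_noiseTail (hlam : 0 < lam) (ha : 0 < a) :
    Tendsto (fun ε ↦ 1 - noiseTail lam ε a) (𝓝[>] 0) (𝓝 1) := by
  have hσ : 0 < √(noiseHorizon lam : ℝ) := Real.sqrt_pos.2 (noiseHorizon_pos hlam)
  simpa [noiseTail] using
    (tendsto_gaussianTail_atTop.comp (tendsto_div_mul_nhdsGT_zero ha hσ)).const_sub 1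

lemma tendsto_noiseTail_div_noiseTail (hlam : 0 < lam) (ha : 0 < a) (hab : a < b) :
    Tendsto (fun ε ↦ noiseTail lam ε b / noiseTail lam ε a) (𝓝[>] 0) (𝓝 0) := by
  have hσ : 0 < √(noiseHorizon lam : ℝ) := Real.sqrt_pos.2 (noiseHorizon_pos hlam)
  have hratio : Tendsto (fun ε ↦ b / (ε * √(noiseHorizon lam)) / (a / (ε * √(noiseHorizon lam))))
      (𝓝[>] 0) (𝓝 (b / a)) := by
    refine tendsto_const_nhds.congr' ?_
    filter_upwards [self_mem_nhdsWithin] with ε (hε : 0 < ε)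
    field_simp
  have hsq : Tendsto (fun ε ↦ (b ^ 2 - a ^ 2) / 2 * (1 / (ε * √(noiseHorizon lam))) ^ 2)
      (𝓝[>] 0) atTop :=
    ((tendsto_pow_atTop two_ne_zero).comp
      (tendsto_div_mul_nhdsGT_zero one_pos hσ)).const_mul_atTop (by nlinarith)
  have hexp : Tendsto (fun ε ↦ Real.exp (-((b / (ε * √(noiseHorizon lam))) ^ 2
      - (a / (ε * √(noiseHorizon lam))) ^ 2) / 2)) (𝓝[>] 0) (𝓝 0) := by
    refine Real.tendsto_exp_atBot.comp ((tendsto_neg_atTop_atBot.comp hsq).congr fun ε ↦ ?_)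
    simp only [Function.comp_apply]
    ring
  simpa only [zero_div, noiseTail] using tendsto_gaussianTail_div (div_pos (ha.trans hab) ha)
    (tendsto_div_mul_nhdsGT_zero ha hσ) hratio hexp

end NoiseTail

section LogTime

variable {lam : ℝ}

lemma tendsto_log_time_atTop (hlam : 0 < lam) (y : ℝ) :
    Tendsto (fun ε : ℝ ↦ 2 / lam * Real.log (1 / ε) + y) (𝓝[>] 0) atTop := by
  simp only [one_div]
  exact tendsto_atTop_add_const_right _ y
    ((Real.tendsto_log_atTop.comp tendsto_inv_nhdsGT_zero).const_mul_atTop (by positivity))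

lemma exp_neg_mul_log_time {ε : ℝ} (hlam : lam ≠ 0) (hε : 0 < ε) (y : ℝ) :
    Real.exp (-(lam * (2 / lam * Real.log (1 / ε) + y))) = ε ^ 2 * Real.exp (-(lam * y)) := by
  have hexponent : -(lam * (2 / lam * Real.log (1 / ε) + y))
      = (2 : ℕ) * Real.log ε + -(lam * y) := by
    rw [one_div, Real.log_inv]
    push_cast
    field_simp
    ring
  rw [hexponent, Real.exp_add, Real.exp_nat_mul, Real.exp_log hε]

lemma coe_noiseClock_log_time {ε : ℝ} (hlam : 0 < lam) (hε : 0 < ε) (y : ℝ)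
    (hs : 0 ≤ 2 / lam * Real.log (1 / ε) + y) :
    (noiseClock lam (2 / lam * Real.log (1 / ε) + y) : ℝ)
      = (1 - (ε ^ 2 * Real.exp (-(lam * y))) ^ 2) / (2 * lam) := by
  rw [coe_noiseClock hlam hs, ← exp_neg_mul_log_time hlam.ne' hε, ← Real.exp_nat_mul]
  push_cast
  ring_nf

lemma tendsto_sq_sub_sq_log_time (hlam : 0 < lam) (x₀ q y : ℝ) :
    Tendsto (fun ε ↦
        ((q * (ε ^ 2 * Real.exp (-(lam * y))) - x₀) /
            (ε * √(noiseClock lam (2 / lam * Real.log (1 / ε) + y)))) ^ 2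
          - (-x₀ / (ε * √(noiseHorizon lam))) ^ 2)
      (𝓝[>] 0) (𝓝 (-(4 * lam * q * x₀ * Real.exp (-(lam * y))))) := by
  generalize hκ : Real.exp (-(lam * y)) = κ
  have hcont : ContinuousAt (fun ε : ℝ ↦
      2 * lam * (q ^ 2 * κ ^ 2 * ε ^ 2 - 2 * q * κ * x₀ + x₀ ^ 2 * κ ^ 2 * ε ^ 2)
        / (1 - (ε ^ 2 * κ) ^ 2)) 0 := .div (by fun_prop) (by fun_prop) (by simp)
  have hlim := hcont.tendsto.mono_left (nhdsWithin_le_nhds (s := Ioi 0))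
  have hvalue : 2 * lam * (q ^ 2 * κ ^ 2 * 0 ^ 2 - 2 * q * κ * x₀ + x₀ ^ 2 * κ ^ 2 * 0 ^ 2)
      / (1 - (0 ^ 2 * κ) ^ 2) = -(4 * lam * q * x₀ * κ) := by ring
  rw [hvalue] at hlim
  refine hlim.congr' ?_
  filter_upwards [self_mem_nhdsWithin, (tendsto_log_time_atTop hlam y).eventually_gt_atTop 0]
    with ε (hε : 0 < ε) hs
  have hclock := coe_noiseClock_log_time hlam hε y hs.le
  have hclock_pos : (0 : ℝ) < noiseClock lam (2 / lam * Real.log (1 / ε) + y) :=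
    NNReal.coe_pos.2 (noiseClock_pos hlam hs)
  have hκε : 0 < 1 - (ε ^ 2 * κ) ^ 2 := by
    rwa [hclock, hκ, div_pos_iff_of_pos_right (by positivity)] at hclock_pos
  rw [div_pow, div_pow, mul_pow ε, mul_pow ε, Real.sq_sqrt hclock_pos.le,
    Real.sq_sqrt (NNReal.coe_nonneg _), hclock, hκ, coe_noiseHorizon hlam]
  generalize hd : 1 - (ε ^ 2 * κ) ^ 2 = d at hκε ⊢
  field_simp
  linear_combination -x₀ ^ 2 * hd

end LogTime

section ExitAsymptotics

variable {Ω : Type*} [MeasurableSpace Ω] {P : Measure Ω} {B : ℝ≥0 → Ω → ℝ} {lam x₀ qm qp : ℝ}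

lemma tendsto_measureReal_le_linearDiffusion_div_noiseTail (hB : IsPreBrownianReal B P)
    (hlam : 0 < lam) (hx₀ : x₀ < 0) {q : ℝ} (hq : 0 ≤ q) (y : ℝ) :
    Tendsto (fun ε ↦
        P.real {ω | q ≤ linearDiffusion lam x₀ ε (B · ω) (2 / lam * Real.log (1 / ε) + y)}
          / noiseTail lam ε (-x₀))
      (𝓝[>] 0) (𝓝 (Real.exp (-(2 * lam * q * |x₀| * Real.exp (-(lam * y)))))) := by
  have hσ : 0 < √(noiseHorizon lam : ℝ) := Real.sqrt_pos.2 (noiseHorizon_pos hlam)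
  have hpos := (tendsto_log_time_atTop hlam y).eventually_gt_atTop 0
  have hlim := tendsto_gaussianTail_div_of_sq_sub_sq
    (tendsto_div_mul_nhdsGT_zero (neg_pos.2 hx₀) hσ) ?_ (tendsto_sq_sub_sq_log_time hlam x₀ q y)
  · convert! hlim.congr' ?_ using 2
    · rw [abs_of_neg hx₀]
      ring_nf
    · filter_upwards [self_mem_nhdsWithin, hpos] with ε (hε : 0 < ε) hs
      simp only [le_linearDiffusion_iff]
      rw [measureReal_le_add_mul hB (noiseClock_pos hlam hs).ne' hε,
        exp_neg_mul_log_time hlam.ne' hε, noiseTail]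
  · filter_upwards [self_mem_nhdsWithin, hpos] with ε (hε : 0 < ε) hs
    have hclock : 0 < √(noiseClock lam (2 / lam * Real.log (1 / ε) + y) : ℝ) :=
      Real.sqrt_pos.2 (noiseClock_pos hlam hs)
    exact div_pos (sub_pos.2 (hx₀.trans_le (by positivity))) (by positivity)

lemma eventually_sub_div_noiseTail_le (hB : IsBrownianReal B P) (hlam : 0 < lam) (hx₀ : x₀ < 0)
    (hqp : 0 < qp) {q : ℝ} (hq : 0 < q) (hqm : qm < -q) {y z : ℝ} (hzy : z < y) :
    ∀ᶠ ε in 𝓝[>] 0,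
      P.real {ω | qp ≤ linearDiffusion lam x₀ ε (B · ω) (2 / lam * Real.log (1 / ε) + z)}
          / noiseTail lam ε (-x₀) - noiseTail lam ε q / noiseTail lam ε (-x₀)
        ≤ P.real {ω | ExitsUpward (linearDiffusion lam x₀ ε (B · ω)) qm qp ∧
            exitTime (linearDiffusion lam x₀ ε (B · ω)) qm qp < 2 / lam * Real.log (1 / ε) + y}
          / noiseTail lam ε (-x₀) := by
  filter_upwards [self_mem_nhdsWithin, (tendsto_log_time_atTop hlam z).eventually_gt_atTop 0]
    with ε (hε : 0 < ε) hs
  rw [← sub_div]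
  refine div_le_div_of_nonneg_right (sub_le_iff_le_add.2 ?_) (gaussianTail_nonneg _)
  exact measureReal_le_exitsUpward_lt_add hB hlam hε (hx₀.trans hqp).le hqp hq hqm hs
    (by linarith)

lemma eventually_div_noiseTail_le (hB : IsBrownianReal B P) (hlam : 0 < lam) {q : ℝ} (hq : 0 < q)
    (hqqp : q < qp) (x₀ qm y : ℝ) :
    ∀ᶠ ε in 𝓝[>] 0,
      P.real {ω | ExitsUpward (linearDiffusion lam x₀ ε (B · ω)) qm qp ∧
            exitTime (linearDiffusion lam x₀ ε (B · ω)) qm qp < 2 / lam * Real.log (1 / ε) + y}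
          / noiseTail lam ε (-x₀)
        ≤ P.real {ω | q ≤ linearDiffusion lam x₀ ε (B · ω) (2 / lam * Real.log (1 / ε) + y)}
          / noiseTail lam ε (-x₀) / (1 - noiseTail lam ε ((qp - q) / 2)) := by
  have hδ : 0 < (qp - q) / 2 := half_pos (sub_pos.2 hqqp)
  filter_upwards [self_mem_nhdsWithin, (tendsto_log_time_atTop hlam y).eventually_ge_atTop 0,
    (tendsto_one_sub_noiseTail hlam hδ).eventually (lt_mem_nhds one_pos)]
    with ε (hε : 0 < ε) hs hδε
  rw [div_right_comm]
  refine div_le_div_of_nonneg_right ((le_div_iff₀' hδε).2 ?_) (gaussianTail_nonneg _)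
  have h := mul_measureReal_exitsUpward_lt_le hB hlam hε hs hδ (q := (qp + q) / 2) (qp := qp)
    (by linarith) (by linarith) x₀ qm
  rwa [show (qp + q) / 2 - (qp - q) / 2 = q by ring] at h

lemma tendsto_measureReal_exitsUpward_lt_div_noiseTail (hB : IsBrownianReal B P) (hlam : 0 < lam)
    (hqm : qm < x₀) (hx₀ : x₀ < 0) (hqp : 0 < qp) (y : ℝ) :
    Tendsto (fun ε ↦
        P.real {ω | ExitsUpward (linearDiffusion lam x₀ ε (B · ω)) qm qp ∧
            exitTime (linearDiffusion lam x₀ ε (B · ω)) qm qp < 2 / lam * Real.log (1 / ε) + y}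
          / noiseTail lam ε (-x₀))
      (𝓝[>] 0) (𝓝 (Real.exp (-(2 * lam * qp * |x₀| * Real.exp (-(lam * y)))))) := by
  have hlim {q : ℝ} (hq : 0 < q) (z : ℝ) := tendsto_measureReal_le_linearDiffusion_div_noiseTail
    hB.toIsPreBrownianReal hlam hx₀ hq.le z
  obtain ⟨q, hxq, hqmq⟩ := exists_between (neg_lt_neg hqm)
  have hq : 0 < q := (neg_pos.2 hx₀).trans hxq
  have hGz : Continuous fun z ↦ Real.exp (-(2 * lam * qp * |x₀| * Real.exp (-(lam * z)))) := by
    fun_prop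
  have hGθ : Continuous fun θ ↦ Real.exp (-(2 * lam * θ * |x₀| * Real.exp (-(lam * y)))) := by
    fun_prop
  refine tendsto_of_approx_le_of_approx_ge (u := 𝓝[<] y) (v := 𝓝[<] qp)
    (g' := fun θ ε ↦
      P.real {ω | θ ≤ linearDiffusion lam x₀ ε (B · ω) (2 / lam * Real.log (1 / ε) + y)}
        / noiseTail lam ε (-x₀) / (1 - noiseTail lam ε ((qp - θ) / 2))) ?_
    (.of_forall fun z ↦ (hlim hqp z).sub
      (tendsto_noiseTail_div_noiseTail hlam (neg_pos.2 hx₀) hxq)) ?_ ?_ ?_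
    hGθ.continuousWithinAt.tendsto
  · filter_upwards [self_mem_nhdsWithin] with z hz
    exact eventually_sub_div_noiseTail_le hB hlam hx₀ hqp hq (lt_neg.1 hqmq) hz
  · simpa only [sub_zero] using hGz.continuousWithinAt.tendsto
  · filter_upwards [Ioo_mem_nhdsLT hqp] with θ hθ
    exact eventually_div_noiseTail_le hB hlam hθ.1 hθ.2 x₀ qm y
  · filter_upwards [Ioo_mem_nhdsLT hqp] with θ hθ
    have hupper := (hlim hθ.1 y).div
      (tendsto_one_sub_noiseTail hlam (half_pos (sub_pos.2 hθ.2))) one_ne_zero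
    rwa [div_one] at hupper

lemma tendsto_measureReal_exitsUpward_div_noiseTail (hB : IsBrownianReal B P) (hlam : 0 < lam)
    (hqm : qm < x₀) (hx₀ : x₀ < 0) (hqp : 0 < qp) :
    Tendsto (fun ε ↦ P.real {ω | ExitsUpward (linearDiffusion lam x₀ ε (B · ω)) qm qp}
      / noiseTail lam ε (-x₀)) (𝓝[>] 0) (𝓝 1) := by
  have := hB.isGaussianProcess.isProbabilityMeasure
  have hG : Tendsto (fun y ↦ Real.exp (-(2 * lam * qp * |x₀| * Real.exp (-(lam * y)))))
      atTop (𝓝 1) := by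
    have hdecay : Tendsto (fun y ↦ Real.exp (-(lam * y))) atTop (𝓝 0) :=
      Real.tendsto_exp_neg_atTop_nhds_zero.comp (tendsto_id.const_mul_atTop hlam)
    simpa using (hdecay.const_mul (2 * lam * qp * |x₀|)).neg.rexp
  have hδ := tendsto_one_sub_noiseTail hlam (half_pos hqp)
  refine tendsto_of_approx_le_of_approx_ge (v := (pure () : Filter Unit))
    (g' := fun _ ε ↦ (1 - noiseTail lam ε (qp / 2))⁻¹) (.of_forall fun y ↦ ?_)
    (.of_forall (tendsto_measureReal_exitsUpward_lt_div_noiseTail hB hlam hqm hx₀ hqp)) hG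
    (.of_forall fun _ ↦ ?_) (.of_forall fun _ ↦ hδ.inv₀ one_ne_zero) (by simp)
  · exact .of_forall fun ε ↦ div_le_div_of_nonneg_right
      (measureReal_mono fun ω hω ↦ hω.1) (gaussianTail_nonneg _)
  · filter_upwards [self_mem_nhdsWithin, hδ.eventually (lt_mem_nhds one_pos)]
      with ε (hε : 0 < ε) hδε
    rw [div_le_iff₀ (noiseTail_pos hlam hε (neg_pos.2 hx₀)), inv_mul_eq_div, le_div_iff₀' hδε]
    exact mul_measureReal_exitsUpward_le hB hlam hε (half_pos hqp) (half_lt_self hqp) x₀ qm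

lemma tendsto_measureReal_exitsUpward_lt_div_measureReal (hB : IsBrownianReal B P) (hlam : 0 < lam)
    (hqm : qm < x₀) (hx₀ : x₀ < 0) (hqp : 0 < qp) (y : ℝ) :
    Tendsto (fun ε ↦
        P.real {ω | ExitsUpward (linearDiffusion lam x₀ ε (B · ω)) qm qp ∧
            exitTime (linearDiffusion lam x₀ ε (B · ω)) qm qp < 2 / lam * Real.log (1 / ε) + y}
          / P.real {ω | ExitsUpward (linearDiffusion lam x₀ ε (B · ω)) qm qp})
      (𝓝[>] 0) (𝓝 (Real.exp (-(2 * lam * qp * |x₀| * Real.exp (-(lam * y)))))) := by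
  have h := (tendsto_measureReal_exitsUpward_lt_div_noiseTail hB hlam hqm hx₀ hqp y).div
    (tendsto_measureReal_exitsUpward_div_noiseTail hB hlam hqm hx₀ hqp) one_ne_zero
  rw [div_one] at h
  refine h.congr' ?_
  filter_upwards [self_mem_nhdsWithin] with ε (hε : 0 < ε)
  exact div_div_div_cancel_right₀ (noiseTail_pos hlam hε (neg_pos.2 hx₀)).ne' _ _

lemma eventually_measureReal_exitsUpward_pos (hB : IsBrownianReal B P) (hlam : 0 < lam)
    (hqm : qm < x₀) (hx₀ : x₀ < 0) (hqp : 0 < qp) :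
    ∀ᶠ ε in 𝓝[>] 0, 0 < P.real {ω | ExitsUpward (linearDiffusion lam x₀ ε (B · ω)) qm qp} := by
  filter_upwards [self_mem_nhdsWithin, (tendsto_measureReal_exitsUpward_div_noiseTail hB hlam hqm
    hx₀ hqp).eventually (lt_mem_nhds one_pos)] with ε (hε : 0 < ε) hratio
  exact (div_pos_iff_of_pos_right (noiseTail_pos hlam hε (neg_pos.2 hx₀))).1 hratio

end ExitAsymptotics

/-! ### Convergence in distribution -/

section WeakConvergence

variable {ι : Type*} {l : Filter ι} [l.IsCountablyGenerated]

lemma tendsto_probabilityMeasure_of_tendsto_Iio {μ : ι → ProbabilityMeasure ℝ}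
    {ν : ProbabilityMeasure ℝ}
    (h : ∀ x, Tendsto (fun i ↦ (μ i : Measure ℝ).real (Iio x)) l
      (𝓝 ((ν : Measure ℝ).real (Iio x)))) :
    Tendsto μ l (𝓝 ν) := by
  refine (isPiSystem_Ico (id : ℝ → ℝ) id).tendsto_probabilityMeasure_of_tendsto_of_mem ?_ ?_ ?_
  · rintro s ⟨a, b, -, rfl⟩
    exact measurableSet_Ico
  · intro u hu x hx
    obtain ⟨a, b, hab, hsub⟩ := mem_nhds_iff_exists_Ioo_subset.1 (hu.mem_nhds hx)
    obtain ⟨c, hac, hcx⟩ := exists_between hab.1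
    exact ⟨Ico c b, ⟨c, b, hcx.trans hab.2, rfl⟩, Ico_mem_nhds hcx hab.2,
      (Ico_subset_Ioo_left hac).trans hsub⟩
  · rintro s ⟨a, b, (hab : a < b), rfl⟩
    have hIco (ρ : ProbabilityMeasure ℝ) :
        (ρ (Ico a b) : ℝ) = (ρ : Measure ℝ).real (Iio b) - (ρ : Measure ℝ).real (Iio a) := by
      rw [← measureReal_sdiff (Iio_subset_Iio hab.le) measurableSet_Iio, Iio_sdiff_Iio]
      rfl
    rw [← NNReal.tendsto_coe]
    simpa only [hIco, id] using (h b).sub (h a)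

lemma tendstoInDistribution_of_tendsto_measureReal_lt {Ω : ι → Type*} {Ω' : Type*}
    [∀ i, MeasurableSpace (Ω i)] [MeasurableSpace Ω'] {μ : ∀ i, Measure (Ω i)} {ν : Measure Ω'}
    [∀ i, IsProbabilityMeasure (μ i)] [IsProbabilityMeasure ν] {Y : ∀ i, Ω i → ℝ} {W : Ω' → ℝ}
    (hY : ∀ i, AEMeasurable (Y i) (μ i)) (hW : AEMeasurable W ν)
    (h : ∀ x, Tendsto (fun i ↦ (μ i).real {ω | Y i ω < x}) l (𝓝 (ν.real {ω | W ω < x}))) :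
    TendstoInDistribution Y l W μ ν where
  forall_aemeasurable := hY
  aemeasurable_limit := hW
  tendsto := tendsto_probabilityMeasure_of_tendsto_Iio fun x ↦ by
    simp only [ProbabilityMeasure.coe_mk, map_measureReal_apply_of_aemeasurable (hY _)
      measurableSet_Iio, map_measureReal_apply_of_aemeasurable hW measurableSet_Iio]
    exact h x

lemma tendsto_integral_comp_of_tendsto_measureReal_lt {Ω Ω' : Type*} [MeasurableSpace Ω]
    [MeasurableSpace Ω'] {μ : ι → Measure Ω} {ν : Measure Ω'} [IsProbabilityMeasure ν]
    {Y : ι → Ω → ℝ} {W : Ω' → ℝ}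
    (hY : ∀ᶠ i in l, IsProbabilityMeasure (μ i) ∧ AEMeasurable (Y i) (μ i)) (hW : AEMeasurable W ν)
    (h : ∀ x, Tendsto (fun i ↦ (μ i).real {ω | Y i ω < x}) l (𝓝 (ν.real {ω | W ω < x})))
    (f : BoundedContinuousFunction ℝ ℝ) :
    Tendsto (fun i ↦ ∫ ω, f (Y i ω) ∂μ i) l (𝓝 (∫ ω, f (W ω) ∂ν)) := by
  let S := {i // IsProbabilityMeasure (μ i) ∧ AEMeasurable (Y i) (μ i)}
  have hS : range (Subtype.val : S → ι) ∈ l := mem_of_superset hY fun i hi ↦ ⟨⟨i, hi⟩, rfl⟩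
  have (i : S) : IsProbabilityMeasure (μ i) := i.2.1
  have hdist : TendstoInDistribution (fun i : S ↦ Y i) (comap Subtype.val l) W (fun i ↦ μ i) ν :=
    tendstoInDistribution_of_tendsto_measureReal_lt (fun i ↦ i.2.2) hW fun x ↦
      (h x).comp tendsto_comap
  have hint := ProbabilityMeasure.tendsto_iff_forall_integral_tendsto.1 hdist.tendsto f
  simp only [ProbabilityMeasure.coe_mk,
    integral_map hW f.continuous.aestronglyMeasurable,
    integral_map (hdist.forall_aemeasurable _) f.continuous.aestronglyMeasurable] at hint
  exact (tendsto_comap'_iff hS).1 hint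

end WeakConvergence

section Conditioning

variable {Ω : Type*} [MeasurableSpace Ω] {P : Measure Ω} {A : Set Ω}

lemma measureReal_cond_of_nullMeasurableSet (hA : NullMeasurableSet A P) (s : Set Ω) :
    P[|A].real s = P.real (A ∩ s) / P.real A := by
  rw [measureReal_def, ProbabilityTheory.cond, Measure.smul_apply, Measure.restrict_apply₀' hA,
    smul_eq_mul, ENNReal.toReal_mul, ENNReal.toReal_inv, inter_comm, inv_mul_eq_div]
  rfl

lemma aemeasurable_cond_of_nullMeasurableSet_inter_lt {T : Ω → ℝ} (hA : NullMeasurableSet A P)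
    (hT : ∀ s, NullMeasurableSet (A ∩ {ω | T ω < s}) P) : AEMeasurable T P[|A] := by
  have hIio (s : ℝ) : NullMeasurableSet (T ⁻¹' Iio s) P[|A] := by
    refine ((hT s).mono_ac cond_absolutelyContinuous).congr (eventuallyEq_set.2 ?_)
    filter_upwards [ae_cond_mem₀ hA] with ω hω using and_iff_right hω
  exact NullMeasurable.aemeasurable
    (measurable_of_Iio (δ := NullMeasurableSpace Ω P[|A]) hIio)

end Conditioning

section Gumbel

variable {Ω : Type*} [MeasurableSpace Ω] {ν : Measure Ω} {Z : Ω → ℝ}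

lemma measureReal_lt_eq_of_measureReal_le_eq [IsFiniteMeasure ν] {F : ℝ → ℝ} (hF : Continuous F)
    (hZ : ∀ x, ν.real {ω | Z ω ≤ x} = F x) (x : ℝ) : ν.real {ω | Z ω < x} = F x := by
  refine le_antisymm ?_ ?_
  · rw [← hZ]
    exact measureReal_mono fun ω (hω : Z ω < x) ↦ hω.le
  · refine le_of_tendsto (hF.continuousWithinAt.tendsto (s := Iio x)) ?_
    filter_upwards [self_mem_nhdsWithin] with y (hy : y < x)
    rw [← hZ]
    exact measureReal_mono fun ω (hω : Z ω ≤ y) ↦ hω.trans_lt hy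

lemma measureReal_affine_gumbel_lt [IsFiniteMeasure ν]
    (hZ : ∀ x, ν.real {ω | Z ω ≤ x} = Real.exp (-Real.exp (-x))) {lam k : ℝ} (hlam : 0 < lam)
    (hk : 0 < k) (x : ℝ) :
    ν.real {ω | 1 / lam * Real.log k + 1 / lam * Z ω < x}
      = Real.exp (-(k * Real.exp (-(lam * x)))) := by
  have hset : {ω | 1 / lam * Real.log k + 1 / lam * Z ω < x}
      = {ω | Z ω < lam * x - Real.log k} := by
    ext ω
    rw [mem_ofPred_eq, mem_ofPred_eq, ← mul_add, one_div, inv_mul_lt_iff₀ hlam, lt_sub_iff_add_lt']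
  rw [hset, measureReal_lt_eq_of_measureReal_le_eq (by fun_prop) hZ, neg_sub, sub_eq_add_neg,
    Real.exp_add, Real.exp_log hk]

end Gumbel

/-! ### The Gumbel limit -/

section BrownianMotion

variable {Ω : Type*} [MeasurableSpace Ω] {P : Measure Ω} {B : ℝ → Ω → ℝ}

lemma IsBrownianMotion.isBrownianReal (hB : IsBrownianMotion P B) :
    IsBrownianReal (fun t : ℝ≥0 ↦ B t) P := by
  obtain ⟨hmeas, hpath, hlaw, hindep⟩ := hB
  refine ⟨HasIndepIncrements.isPreBrownianReal_of_hasLaw (fun t ↦ ?_)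
    (.of_nat fun t ht _ ↦ hindep (fun i ↦ t i) (fun i j hij ↦ ht hij) fun i ↦ (t i).2), ?_⟩
  · refine ⟨(hmeas t).aemeasurable, ?_⟩
    have hincr := hlaw 0 t le_rfl t.2
    rw [sub_zero, Real.toNNReal_coe] at hincr
    rw [← hincr]
    refine Measure.map_congr ?_
    filter_upwards [hpath] with ω hω
    rw [hω.1, sub_zero]
  · filter_upwards [hpath] with ω hω using
      hω.2.comp_continuous NNReal.continuous_coe fun t ↦ t.2

end BrownianMotion

section ExitLaw

variable {Ω : Type*} [MeasurableSpace Ω] {P : Measure Ω} {B : ℝ≥0 → Ω → ℝ} {lam x₀ qm qp : ℝ}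

lemma eventually_isProbabilityMeasure_cond_exitsUpward (hB : IsBrownianReal B P) (hlam : 0 < lam)
    (hqm : qm < x₀) (hx₀ : x₀ < 0) (hqp : 0 < qp) :
    ∀ᶠ ε in 𝓝[>] 0,
      IsProbabilityMeasure P[|{ω | ExitsUpward (linearDiffusion lam x₀ ε (B · ω)) qm qp}] := by
  have := hB.isGaussianProcess.isProbabilityMeasure
  filter_upwards [eventually_measureReal_exitsUpward_pos hB hlam hqm hx₀ hqp] with ε hpos
  exact cond_isProbabilityMeasure fun hzero ↦ hpos.ne' (by rw [measureReal_def, hzero]; rfl)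

lemma aemeasurable_exitTime_cond_exitsUpward (hB : IsBrownianReal B P) (hq : qm < qp)
    (lam x₀ ε : ℝ) :
    AEMeasurable (fun ω ↦ exitTime (linearDiffusion lam x₀ ε (B · ω)) qm qp)
      P[|{ω | ExitsUpward (linearDiffusion lam x₀ ε (B · ω)) qm qp}] :=
  have hmeas := aemeasurable_linearDiffusion hB.toIsPreBrownianReal lam x₀ ε
  have hcont := ae_continuousOn_linearDiffusion hB lam x₀ ε
  aemeasurable_cond_of_nullMeasurableSet_inter_lt (nullMeasurableSet_exitsUpward hmeas hcont hq)
    fun s ↦ nullMeasurableSet_exitsUpward_and_exitTime_lt hmeas hcont hq s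

lemma tendsto_measureReal_cond_exitsUpward_lt (hB : IsBrownianReal B P) (hlam : 0 < lam)
    (hqm : qm < x₀) (hx₀ : x₀ < 0) (hqp : 0 < qp) (y : ℝ) :
    Tendsto (fun ε ↦
        P[|{ω | ExitsUpward (linearDiffusion lam x₀ ε (B · ω)) qm qp}].real
          {ω | exitTime (linearDiffusion lam x₀ ε (B · ω)) qm qp - 2 / lam * Real.log (1 / ε) < y})
      (𝓝[>] 0) (𝓝 (Real.exp (-(2 * lam * qp * |x₀| * Real.exp (-(lam * y)))))) := by
  refine (tendsto_measureReal_exitsUpward_lt_div_measureReal hB hlam hqm hx₀ hqp y).congr fun ε ↦ ?_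
  rw [measureReal_cond_of_nullMeasurableSet (nullMeasurableSet_exitsUpward
    (aemeasurable_linearDiffusion hB.toIsPreBrownianReal lam x₀ ε)
    (ae_continuousOn_linearDiffusion hB lam x₀ ε) (hqm.trans (hx₀.trans hqp)))]
  simp only [sub_lt_iff_lt_add']
  rfl

end ExitLaw

theorem gumbel_limit_reactive_paths_general
    {Ω : Type*} [MeasurableSpace Ω] {P : Measure Ω} {B : ℝ≥0 → Ω → ℝ} (hB : IsBrownianReal B P)
    {lam qm x₀ qp : ℝ} (hlam : 0 < lam) (hqm : qm < x₀) (hx₀ : x₀ < 0) (hqp : 0 < qp)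
    {X : ℝ → Ω → ℝ → ℝ} (hX : ∀ ε ω, EqOn (X ε ω) (linearDiffusion lam x₀ ε (B · ω)) (Ici 0))
    {Ω' : Type*} [MeasurableSpace Ω'] {P' : Measure Ω'} [IsProbabilityMeasure P']
    {Z : Ω' → ℝ} (hZmeas : AEMeasurable Z P')
    (hZ : ∀ x, P'.real {ω' | Z ω' ≤ x} = Real.exp (-Real.exp (-x)))
    (f : BoundedContinuousFunction ℝ ℝ) :
    Tendsto (fun ε ↦ ∫ ω, f (exitTime (X ε ω) qm qp - 2 / lam * Real.log (1 / ε))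
        ∂P[|{ω | ExitsUpward (X ε ω) qm qp}])
      (𝓝[>] 0)
      (𝓝 (∫ ω', f (1 / lam * Real.log (2 * lam * qp * |x₀|) + 1 / lam * Z ω') ∂P')) := by
  simp only [exitTime_congr (hX _ _), exitsUpward_congr (hX _ _)]
  have hk : 0 < 2 * lam * qp * |x₀| := mul_pos (by positivity) (abs_pos.2 hx₀.ne)
  refine tendsto_integral_comp_of_tendsto_measureReal_lt ?_ (by fun_prop) (fun y ↦ ?_) f
  · filter_upwards [eventually_isProbabilityMeasure_cond_exitsUpward hB hlam hqm hx₀ hqp]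
      with ε hprob
    exact ⟨hprob, (aemeasurable_exitTime_cond_exitsUpward hB (hqm.trans (hx₀.trans hqp))
      lam x₀ ε).sub_const _⟩
  · rw [measureReal_affine_gumbel_lt hZ hlam hk]
    exact tendsto_measureReal_cond_exitsUpward_lt hB hlam hqm hx₀ hqp y

/-- Theorem 2 (Gumbel limit for reactive path exit times, linear case):
for `λ > 0`, `qm < x₀ < 0 < qp`, the law of `τ_ε - (2/λ) ln(1/ε)` conditioned on exit at `qp`
converges weakly, as `ε → 0⁺`, to the law of `(1/λ) ln(2 λ qp |x₀|) + (1/λ) Z` with `Z`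
standard Gumbel. -/
theorem gumbel_limit_reactive_paths
    {Ω : Type*} [MeasurableSpace Ω] (P : Measure Ω) [IsProbabilityMeasure P]
    (hPc : P.IsComplete)
    (B : ℝ → Ω → ℝ) (hB : IsBrownianMotion P B)
    (lam qm x₀ qp : ℝ) (hlam : 0 < lam) (hqm : qm < x₀) (hx₀ : x₀ < 0) (hqp : 0 < qp)
    (X : ℝ → ℝ → Ω → ℝ)
    (hX : ∀ ε t ω, X ε t ω
      = Real.exp (lam * t) * (x₀ + ε * B ((1 - Real.exp (-(2 * lam * t))) / (2 * lam)) ω))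
    (τ : ℝ → Ω → ℝ)
    (hτ : ∀ ε ω, τ ε ω = sInf {t | 0 ≤ t ∧ (X ε t ω = qm ∨ X ε t ω = qp)})
    (C : ℝ → Set Ω)
    (hC : ∀ ε, C ε
      = {ω | {t | 0 ≤ t ∧ (X ε t ω = qm ∨ X ε t ω = qp)}.Nonempty ∧ X ε (τ ε ω) ω = qp})
    -- `Z` is a standard Gumbel random variable on an auxiliary probability space
    {Ω' : Type*} [MeasurableSpace Ω'] (P' : Measure Ω') [IsProbabilityMeasure P']
    (Z : Ω' → ℝ) (hZmeas : Measurable Z)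
    (hZ : ∀ x : ℝ, (P' {ω' | Z ω' ≤ x}).toReal = Real.exp (-Real.exp (-x))) :
    ∀ f : BoundedContinuousFunction ℝ ℝ,
      Tendsto
        (fun ε : ℝ => ∫ ω, f (τ ε ω - (2 / lam) * Real.log (1 / ε)) ∂(P[|C ε]))
        (𝓝[>] 0)
        (𝓝 (∫ ω', f ((1 / lam) * Real.log (2 * lam * qp * |x₀|) + (1 / lam) * Z ω') ∂P')) := by
  obtain ⟨rfl, rfl⟩ : τ = _ ∧ C = _ := ⟨funext₂ hτ, funext hC⟩
  exact gumbel_limit_reactive_paths_general hB.isBrownianReal hlam hqm hx₀ hqp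
    (fun ε ω t ht ↦ by rw [hX, linearDiffusion, coe_noiseClock hlam ht]) hZmeas.aemeasurable hZ
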